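/- Let φ : [0,a] → ℝ and f, z : [0,b] → ℝ be continuously differentiable with φ'(u) > 0 for all u and z'(v) > 0 for all v. Fix t > −1 with z'(v)² − t·f'(v)² ≥ 0 for all v. Define σᵗ(u,v) = ( √(1+t)·f(v)·cos( φ(u)/√(1+t) ), √(1+t)·f(v)·sin( φ(u)/√(1+t) ), z(0) + ∫₀ᵛ √( z'(w)² − t f'(w)² ) dw ). Then for all (u,v): ‖σᵗ_u(u,v)‖² = f(v)²·φ'(u)², ⟪σᵗ_u(u,v), σᵗ_v(u,v)⟫ = 0, and ‖σᵗ_v(u,v)‖² = f'(v)² + z'(v)². In particular the first fundamental form of σᵗ coincides with that of the surface of revolution σ⁰(u,v) = (f(v)cos φ(u), f(v)sin φ(u), z(v)), so σᵗ is an isometric deformation of σ⁰ in the class of surfaces of revolution. -/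

import Mathlib

open Real Set

/-- A vector in Euclidean space `ℝ³` given by its three coordinates. -/
noncomputable def e3 (x y z : ℝ) : EuclideanSpace ℝ (Fin 3) := !₂[x, y, z]

/-!
Rescaling the radius of a surface of revolution by `k` and its angle by `1 / k` preserves the
coefficient `E = (f φ')²`, and `F` always vanishes. Only `G` changes, from `f'² + z'²` to
`k² f'² + h'²`, where `h` is the new height function. For `k² = 1 + t` the two agree exactly when
`h'² = z'² - t f'²`, which is solved by integrating the square root of the right-hand side.
-/

section Coordinates

variable {x y z : ℝ → ℝ} {x' y' z' p : ℝ} {S : Set ℝ}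

theorem hasDerivWithinAt_e3 (hx : HasDerivWithinAt x x' S p) (hy : HasDerivWithinAt y y' S p)
    (hz : HasDerivWithinAt z z' S p) :
    HasDerivWithinAt (fun q => e3 (x q) (y q) (z q)) (e3 x' y' z') S p := by
  have hcoord : HasDerivWithinAt (fun q => ![x q, y q, z q]) ![x', y', z'] S p :=
    hasDerivWithinAt_pi.2 (Fin.forall_fin_succ.2 ⟨hx, Fin.forall_fin_two.2 ⟨hy, hz⟩⟩)
  exact (PiLp.hasFDerivAt_toLp (𝕜 := ℝ) 2 _).comp_hasDerivWithinAt p hcoord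

theorem inner_e3 (x₁ y₁ z₁ x₂ y₂ z₂ : ℝ) :
    inner ℝ (e3 x₁ y₁ z₁) (e3 x₂ y₂ z₂) = x₁ * x₂ + y₁ * y₂ + z₁ * z₂ := by
  simp [e3, PiLp.inner_apply, Fin.sum_univ_three, mul_comm]

theorem norm_sq_e3 (x y z : ℝ) : ‖e3 x y z‖ ^ 2 = x ^ 2 + y ^ 2 + z ^ 2 := by
  rw [← real_inner_self_eq_norm_sq, inner_e3]
  ring

end Coordinates

theorem hasDerivWithinAt_integral_of_continuousOn_Icc {V : Type*} [NormedAddCommGroup V]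
    [NormedSpace ℝ V] [CompleteSpace V] {g : ℝ → V} {a b c x : ℝ}
    (hg : ContinuousOn g (Icc a b)) (hc : c ∈ Icc a b) (hx : x ∈ Icc a b) :
    HasDerivWithinAt (fun y => ∫ w in c..y, g w) (g x) (Icc a b) x :=
  have : Fact (x ∈ Icc a b) := ⟨hx⟩
  intervalIntegral.integral_hasDerivWithinAt_right (t := Icc a b)
    (hg.mono (uIcc_subset_Icc hc hx)).intervalIntegrable
    (hg.stronglyMeasurableAtFilter_nhdsWithin measurableSet_Icc x) (hg x hx)

/-- The parametrized surface `σ` has partial derivatives at `(u, v)`, and the coefficients of its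
first fundamental form there are `E`, `F`, `G`. The partial derivatives are taken within `S` and
`T`, so that closed parameter intervals are allowed. -/
def HasFirstFundamentalFormWithinAt {V : Type*} [NormedAddCommGroup V] [InnerProductSpace ℝ V]
    (σ : ℝ → ℝ → V) (S T : Set ℝ) (u v E F G : ℝ) : Prop :=
  ∃ σu σv : V,
    HasDerivWithinAt (fun u' => σ u' v) σu S u ∧
    HasDerivWithinAt (fun v' => σ u v') σv T v ∧
    ‖σu‖ ^ 2 = E ∧ inner ℝ σu σv = F ∧ ‖σv‖ ^ 2 = G

/-- The surface of revolution about the third axis whose profile curve has radius `r` and height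
`h`, with the rotation angle parametrized by `θ`. -/
noncomputable def surfaceOfRevolution (r h θ : ℝ → ℝ) (u v : ℝ) : EuclideanSpace ℝ (Fin 3) :=
  e3 (r v * cos (θ u)) (r v * sin (θ u)) (h v)

/-- The surface `σᵗ` in the deformation of `surfaceOfRevolution f z φ`; the functions `f'` and `z'`
stand for the derivatives of `f` and `z`. -/
noncomputable def surfaceOfRevolutionDeformation (t : ℝ) (f f' z z' φ : ℝ → ℝ) :
    ℝ → ℝ → EuclideanSpace ℝ (Fin 3) :=
  surfaceOfRevolution (fun v => √(1 + t) * f v)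
    (fun v => z 0 + ∫ w in (0 : ℝ)..v, √(z' w ^ 2 - t * f' w ^ 2)) (fun u => φ u / √(1 + t))

section SurfaceOfRevolution

variable {r h θ : ℝ → ℝ} {r' h' θ' u v : ℝ} {S T : Set ℝ}

theorem hasDerivWithinAt_surfaceOfRevolution_angle (hθ : HasDerivWithinAt θ θ' S u) :
    HasDerivWithinAt (fun u' => surfaceOfRevolution r h θ u' v)
      (e3 (r v * (-sin (θ u) * θ')) (r v * (cos (θ u) * θ')) 0) S u :=
  hasDerivWithinAt_e3 (hθ.cos.const_mul (r v)) (hθ.sin.const_mul (r v))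
    (hasDerivWithinAt_const u S (h v))

theorem hasDerivWithinAt_surfaceOfRevolution_profile (hr : HasDerivWithinAt r r' T v)
    (hh : HasDerivWithinAt h h' T v) :
    HasDerivWithinAt (fun v' => surfaceOfRevolution r h θ u v')
      (e3 (r' * cos (θ u)) (r' * sin (θ u)) h') T v :=
  hasDerivWithinAt_e3 (hr.mul_const (cos (θ u))) (hr.mul_const (sin (θ u))) hh

theorem hasFirstFundamentalFormWithinAt_surfaceOfRevolution (hθ : HasDerivWithinAt θ θ' S u)
    (hr : HasDerivWithinAt r r' T v) (hh : HasDerivWithinAt h h' T v) :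
    HasFirstFundamentalFormWithinAt (surfaceOfRevolution r h θ) S T u v
      (r v ^ 2 * θ' ^ 2) 0 (r' ^ 2 + h' ^ 2) := by
  refine ⟨_, _, hasDerivWithinAt_surfaceOfRevolution_angle hθ,
    hasDerivWithinAt_surfaceOfRevolution_profile hr hh, ?_, ?_, ?_⟩
  · rw [norm_sq_e3]
    linear_combination r v ^ 2 * θ' ^ 2 * sin_sq_add_cos_sq (θ u)
  · rw [inner_e3]
    ring
  · rw [norm_sq_e3]
    linear_combination r' ^ 2 * sin_sq_add_cos_sq (θ u)

theorem hasFirstFundamentalFormWithinAt_surfaceOfRevolution_rescale {k : ℝ} (hk : k ≠ 0)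
    (hθ : HasDerivWithinAt θ θ' S u) (hr : HasDerivWithinAt r r' T v)
    (hh : HasDerivWithinAt h h' T v) :
    HasFirstFundamentalFormWithinAt
      (surfaceOfRevolution (fun v' => k * r v') h (fun u' => θ u' / k)) S T u v
      (r v ^ 2 * θ' ^ 2) 0 (k ^ 2 * r' ^ 2 + h' ^ 2) := by
  have hE : (k * r v) ^ 2 * (θ' / k) ^ 2 = r v ^ 2 * θ' ^ 2 := by field_simp
  rw [← hE, ← mul_pow k r']
  exact hasFirstFundamentalFormWithinAt_surfaceOfRevolution (hθ.div_const k) (hr.const_mul k) hh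

end SurfaceOfRevolution

theorem hasFirstFundamentalFormWithinAt_surfaceOfRevolutionDeformation {S : Set ℝ}
    {b t u v φ'u : ℝ} {φ f f' z z' : ℝ → ℝ} (hφ : HasDerivWithinAt φ φ'u S u)
    (hf : HasDerivWithinAt f (f' v) (Icc 0 b) v)
    (hf' : ContinuousOn f' (Icc 0 b)) (hz' : ContinuousOn z' (Icc 0 b)) (ht : -1 < t)
    (htz : 0 ≤ z' v ^ 2 - t * f' v ^ 2) (hv : v ∈ Icc 0 b) :
    HasFirstFundamentalFormWithinAt (surfaceOfRevolutionDeformation t f f' z z' φ)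
      S (Icc 0 b) u v (f v ^ 2 * φ'u ^ 2) 0 (f' v ^ 2 + z' v ^ 2) := by
  have ht' : 0 < 1 + t := by linarith
  have hspeed : ContinuousOn (fun w => √(z' w ^ 2 - t * f' w ^ 2)) (Icc 0 b) := by fun_prop
  have hheight := (hasDerivWithinAt_integral_of_continuousOn_Icc hspeed
    (left_mem_Icc.2 (hv.1.trans hv.2)) hv).const_add (z 0)
  have hG : √(1 + t) ^ 2 * f' v ^ 2 + √(z' v ^ 2 - t * f' v ^ 2) ^ 2 = f' v ^ 2 + z' v ^ 2 := by
    rw [sq_sqrt ht'.le, sq_sqrt htz]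
    ring
  rw [← hG]
  exact hasFirstFundamentalFormWithinAt_surfaceOfRevolution_rescale (sqrt_ne_zero'.2 ht') hφ hf
    hheight

theorem stmt_16_general (S : Set ℝ) (b : ℝ) (φ φ' f z f' z' : ℝ → ℝ)
    (hφ : ∀ u ∈ S, HasDerivWithinAt φ (φ' u) S u)
    (hf : ∀ v ∈ Icc 0 b, HasDerivWithinAt f (f' v) (Icc 0 b) v)
    (hz : ∀ v ∈ Icc 0 b, HasDerivWithinAt z (z' v) (Icc 0 b) v)
    (hf' : ContinuousOn f' (Icc 0 b)) (hz' : ContinuousOn z' (Icc 0 b)) (t : ℝ) (ht : -1 < t)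
    (htz : ∀ v ∈ Icc 0 b, 0 ≤ z' v ^ 2 - t * f' v ^ 2) :
    ∀ u ∈ S, ∀ v ∈ Icc 0 b,
      HasFirstFundamentalFormWithinAt (surfaceOfRevolution f z φ) S (Icc 0 b) u v
        (f v ^ 2 * φ' u ^ 2) 0 (f' v ^ 2 + z' v ^ 2) ∧
      HasFirstFundamentalFormWithinAt (surfaceOfRevolutionDeformation t f f' z z' φ)
        S (Icc 0 b) u v (f v ^ 2 * φ' u ^ 2) 0 (f' v ^ 2 + z' v ^ 2) :=
  fun u hu v hv =>
    ⟨hasFirstFundamentalFormWithinAt_surfaceOfRevolution (hφ u hu) (hf v hv) (hz v hv),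
      hasFirstFundamentalFormWithinAt_surfaceOfRevolutionDeformation (hφ u hu) (hf v hv) hf' hz'
        ht (htz v hv) hv⟩

/-- **Theorem 5.7.** The explicit isometric deformation of a surface of revolution
`σ⁰(u,v) = (f(v)cos φ(u), f(v)sin φ(u), z(v))` within the class of surfaces of revolution:
the deformed surface `σᵗ` has first fundamental form `E = f²φ'²`, `F = 0`,
`G = f'² + z'²`, i.e. the same as `σ⁰`. -/
theorem stmt_16 (a b : ℝ)
    (φ φ' f z f' z' : ℝ → ℝ)
    (hφ : ∀ u ∈ Icc 0 a, HasDerivWithinAt φ (φ' u) (Icc 0 a) u)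
    (hφ'c : ContinuousOn φ' (Icc 0 a))
    (hφ'pos : ∀ u ∈ Icc 0 a, 0 < φ' u)
    (hf : ∀ v ∈ Icc 0 b, HasDerivWithinAt f (f' v) (Icc 0 b) v)
    (hz : ∀ v ∈ Icc 0 b, HasDerivWithinAt z (z' v) (Icc 0 b) v)
    (hf' : ContinuousOn f' (Icc 0 b)) (hz' : ContinuousOn z' (Icc 0 b))
    (hz'pos : ∀ v ∈ Icc 0 b, 0 < z' v)
    (t : ℝ) (ht : -1 < t)
    (htz : ∀ v ∈ Icc 0 b, 0 ≤ z' v ^ 2 - t * f' v ^ 2)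
    (σ : ℝ → ℝ → EuclideanSpace ℝ (Fin 3))
    (hσ : ∀ u v, σ u v =
      e3 (Real.sqrt (1 + t) * f v * cos (φ u / Real.sqrt (1 + t)))
         (Real.sqrt (1 + t) * f v * sin (φ u / Real.sqrt (1 + t)))
         (z 0 + ∫ w in (0:ℝ)..v, Real.sqrt (z' w ^ 2 - t * f' w ^ 2))) :
    ∀ u ∈ Icc 0 a, ∀ v ∈ Icc 0 b,
      ∃ su sv : EuclideanSpace ℝ (Fin 3),
        HasDerivWithinAt (fun u' => σ u' v) su (Icc 0 a) u ∧
        HasDerivWithinAt (fun v' => σ u v') sv (Icc 0 b) v ∧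
        ‖su‖ ^ 2 = f v ^ 2 * φ' u ^ 2 ∧
        (inner ℝ su sv : ℝ) = 0 ∧
        ‖sv‖ ^ 2 = f' v ^ 2 + z' v ^ 2 := by
  obtain rfl : σ = surfaceOfRevolutionDeformation t f f' z z' φ := funext₂ hσ
  exact fun u hu v hv =>
    (stmt_16_general (Icc 0 a) b φ φ' f z f' z' hφ hf hz hf' hz' t ht htz u hu v hv).2
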